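/- Let k=(k1,k2) and l=(l1,l2) be nonzero elements of ℕ₀² with k1 ≠ l1 and k2 ≠ l2. Then the quantity C(k,l) = −(1/(4·S_T·‖k‖²·‖l‖²))·[ (k×l)⁴/‖k+l‖² + (k×l)⁴/‖k−l‖² + (k×l̄)⁴/‖k+l̄‖² + (k×l̄)⁴/‖k−l̄‖² ] is well defined (all four denominators are nonzero), is strictly negative, and satisfies −min{‖k‖², ‖l‖²}/S_T ≤ C(k,l) < 0. -/

import Mathlib

/-- Area of the flat torus ℝ²/(2πℤ)². -/
noncomputable def STorus : ℝ := 4 * Real.pi ^ 2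

/-- Cross product k×l = k1·l2 − k2·l1. -/
def cross (k l : ℤ × ℤ) : ℤ := k.1 * l.2 - k.2 * l.1

/-- Squared norm ‖k‖² = k1² + k2². -/
def nsq (k : ℤ × ℤ) : ℤ := k.1 ^ 2 + k.2 ^ 2

/-- Reflection l̄ = (l1, −l2). -/
def conjPt (l : ℤ × ℤ) : ℤ × ℤ := (l.1, -l.2)

/-- Embedding of ℕ₀² into ℤ². -/
def emb (k : ℕ × ℕ) : ℤ × ℤ := ((k.1 : ℤ), (k.2 : ℤ))

/-- Sectional curvature C(k,l) of SDiff(𝕂) in the plane spanned by ξ_k, η_l. -/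
noncomputable def Ccurv (k l : ℤ × ℤ) : ℝ :=
  -(1 / (4 * STorus * (nsq k : ℝ) * (nsq l : ℝ))) *
    ((cross k l : ℝ) ^ 4 / (nsq (k + l) : ℝ) +
     (cross k l : ℝ) ^ 4 / (nsq (k - l) : ℝ) +
     (cross k (conjPt l) : ℝ) ^ 4 / (nsq (k + conjPt l) : ℝ) +
     (cross k (conjPt l) : ℝ) ^ 4 / (nsq (k - conjPt l) : ℝ))

/-!
The bracket in `C(k,l)` is a sum of terms `(k×l')⁴ / ‖k+l'‖²` with `l' ∈ {l, -l, l̄, -l̄}`, all of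
the same norm. Twice the area of the triangle with sides `k`, `l'`, `k+l'` is `|k×l'|`, whichever
two sides it is computed from. Cauchy-Schwarz applied to each pair of sides bounds `(k×l')²` by
`‖k‖²‖l‖²` and by `min(‖k‖², ‖l‖²) ‖k+l'‖²`; multiplying the two bounds estimates each term.
For strict negativity, `k×l` and `k×l̄` vanish together only if `k₁l₂ = k₂l₁ = 0`,
which for nonzero `k`, `l` puts both on one coordinate axis, where they share a zero coordinate.
-/

theorem fst_mul_snd_ne_zero_or_snd_mul_fst_ne_zero {R : Type*} [MulZeroClass R] [NoZeroDivisors R]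
    {k l : R × R} (hk : k ≠ 0) (hl : l ≠ 0) (h1 : k.1 ≠ l.1) (h2 : k.2 ≠ l.2) :
    k.1 * l.2 ≠ 0 ∨ k.2 * l.1 ≠ 0 := by
  simp only [Ne, Prod.ext_iff, Prod.fst_zero, Prod.snd_zero] at hk hl
  grind [mul_eq_zero]

theorem add_ne_zero_of_abs_ne {R : Type*} [Lattice R] [AddGroup R] {k l : R × R}
    (h : |k.1| ≠ |l.1| ∨ |k.2| ≠ |l.2|) : k + l ≠ 0 := by
  rw [Ne, add_eq_zero_iff_eq_neg]
  rintro rfl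
  simp at h

section

variable (k l : ℤ × ℤ)

theorem nsq_nonneg : 0 ≤ nsq k := by
  unfold nsq
  positivity

variable {k} in
theorem nsq_eq_zero : nsq k = 0 ↔ k = 0 := by
  rw [nsq, add_eq_zero_iff_of_nonneg (sq_nonneg _) (sq_nonneg _), sq_eq_zero_iff, sq_eq_zero_iff]
  exact (Prod.ext_iff (y := 0)).symm

variable {k} in
theorem nsq_pos : 0 < nsq k ↔ k ≠ 0 :=
  (nsq_nonneg k).lt_iff_ne'.trans nsq_eq_zero.not

theorem nsq_neg : nsq (-l) = nsq l := by
  simp [nsq]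

theorem nsq_conjPt : nsq (conjPt l) = nsq l := by
  simp [nsq, conjPt]

theorem cross_neg_right : cross k (-l) = -cross k l := by
  simp only [cross, Prod.fst_neg, Prod.snd_neg]
  ring

variable {k l} in
theorem cross_ne_zero_or_cross_conjPt_ne_zero (h : k.1 * l.2 ≠ 0 ∨ k.2 * l.1 ≠ 0) :
    cross k l ≠ 0 ∨ cross k (conjPt l) ≠ 0 := by
  simp only [cross, conjPt, mul_neg]
  lia

theorem cross_self_add_right : cross k (k + l) = cross k l := by
  simp only [cross, Prod.fst_add, Prod.snd_add]
  ring

theorem cross_add_self_left : cross (k + l) l = cross k l := by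
  simp only [cross, Prod.fst_add, Prod.snd_add]
  ring

theorem cross_sq_le_nsq_mul_nsq : cross k l ^ 2 ≤ nsq k * nsq l := by
  have lagrange : nsq k * nsq l = cross k l ^ 2 + (k.1 * l.1 + k.2 * l.2) ^ 2 := by
    simp only [nsq, cross]
    ring
  rw [lagrange]
  exact le_add_of_nonneg_right (sq_nonneg _)

theorem cross_sq_le_min_mul_nsq_add :
    cross k l ^ 2 ≤ min (nsq k) (nsq l) * nsq (k + l) := by
  rw [min_mul_of_nonneg _ _ (nsq_nonneg _), le_min_iff]
  constructor
  · simpa only [cross_self_add_right] using cross_sq_le_nsq_mul_nsq k (k + l)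
  · simpa only [cross_add_self_left, mul_comm] using cross_sq_le_nsq_mul_nsq (k + l) l

theorem cross_pow_four_le :
    cross k l ^ 4 ≤ min (nsq k) (nsq l) * (nsq k * nsq l) * nsq (k + l) :=
  calc cross k l ^ 4 = cross k l ^ 2 * cross k l ^ 2 := by ring
    _ ≤ (min (nsq k) (nsq l) * nsq (k + l)) * (nsq k * nsq l) :=
      mul_le_mul (cross_sq_le_min_mul_nsq_add k l) (cross_sq_le_nsq_mul_nsq k l) (sq_nonneg _)
        (mul_nonneg (le_min (nsq_nonneg k) (nsq_nonneg l)) (nsq_nonneg _))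
    _ = min (nsq k) (nsq l) * (nsq k * nsq l) * nsq (k + l) := by ring

/-- The contribution `(k×l)⁴ / ‖k+l‖²` of the triad of wave vectors `k`, `l`, `k+l` to the bracket
in `Ccurv`. The other three summands are its values at `-l`, `l̄` and `-l̄`. -/
noncomputable def triadTerm : ℝ := (cross k l : ℝ) ^ 4 / (nsq (k + l) : ℝ)

theorem triadTerm_nonneg : 0 ≤ triadTerm k l :=
  div_nonneg (by positivity) (mod_cast nsq_nonneg _)

variable {k l} in
theorem triadTerm_pos (hcross : cross k l ≠ 0) (hadd : nsq (k + l) ≠ 0) : 0 < triadTerm k l := by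
  refine (triadTerm_nonneg k l).lt_of_ne' (div_ne_zero (pow_ne_zero 4 ?_) ?_)
  · exact_mod_cast hcross
  · exact_mod_cast hadd

theorem triadTerm_le :
    triadTerm k l ≤ min (nsq k : ℝ) (nsq l) * ((nsq k : ℝ) * nsq l) := by
  have hk : (0 : ℝ) ≤ nsq k := mod_cast nsq_nonneg k
  have hl : (0 : ℝ) ≤ nsq l := mod_cast nsq_nonneg l
  refine div_le_of_le_mul₀ (mod_cast nsq_nonneg _) (by positivity) ?_
  exact_mod_cast cross_pow_four_le k l

/-- The bracket in `Ccurv`, as the sum of `triadTerm` over the images of `l` under the group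
generated by `l ↦ -l` and `l ↦ l̄`. -/
noncomputable def triadSum : ℝ :=
  triadTerm k l + triadTerm k (-l) + triadTerm k (conjPt l) + triadTerm k (-conjPt l)

theorem Ccurv_eq_neg_triadSum_div :
    Ccurv k l = -(triadSum k l / (4 * STorus * nsq k * nsq l)) := by
  simp only [Ccurv, triadSum, triadTerm, cross_neg_right, Int.cast_neg, Even.neg_pow ⟨2, rfl⟩,
    ← sub_eq_add_neg]
  ring

theorem triadSum_le :
    triadSum k l ≤ 4 * (min (nsq k : ℝ) (nsq l) * ((nsq k : ℝ) * nsq l)) := by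
  have pos := triadTerm_le k l
  have neg := triadTerm_le k (-l)
  have conj := triadTerm_le k (conjPt l)
  have negConj := triadTerm_le k (-conjPt l)
  simp only [nsq_neg, nsq_conjPt] at neg conj negConj
  unfold triadSum
  linarith

variable {k l}

theorem triadSum_pos (hadd : nsq (k + l) ≠ 0) (hadd_conj : nsq (k + conjPt l) ≠ 0)
    (hcross : cross k l ≠ 0 ∨ cross k (conjPt l) ≠ 0) : 0 < triadSum k l := by
  have pos := triadTerm_nonneg k l
  have neg := triadTerm_nonneg k (-l)
  have conj := triadTerm_nonneg k (conjPt l)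
  have negConj := triadTerm_nonneg k (-conjPt l)
  unfold triadSum
  rcases hcross with h | h
  · linarith [triadTerm_pos h hadd]
  · linarith [triadTerm_pos h hadd_conj]

theorem STorus_pos : 0 < STorus := by
  unfold STorus
  positivity

theorem Ccurv_neg (hk : k ≠ 0) (hl : l ≠ 0) (hsum : 0 < triadSum k l) : Ccurv k l < 0 := by
  have hS := STorus_pos
  have hnk : (0 : ℝ) < nsq k := mod_cast nsq_pos.2 hk
  have hnl : (0 : ℝ) < nsq l := mod_cast nsq_pos.2 hl
  rw [Ccurv_eq_neg_triadSum_div, neg_lt_zero]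
  positivity

theorem neg_min_nsq_div_le_Ccurv (hk : k ≠ 0) (hl : l ≠ 0) :
    -(min (nsq k : ℝ) (nsq l) / STorus) ≤ Ccurv k l := by
  have hS := STorus_pos
  have hnk : (0 : ℝ) < nsq k := mod_cast nsq_pos.2 hk
  have hnl : (0 : ℝ) < nsq l := mod_cast nsq_pos.2 hl
  rw [Ccurv_eq_neg_triadSum_div, neg_le_neg_iff]
  calc triadSum k l / (4 * STorus * nsq k * nsq l)
      ≤ 4 * (min (nsq k : ℝ) (nsq l) * ((nsq k : ℝ) * nsq l)) / (4 * STorus * nsq k * nsq l) := by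
        gcongr
        exact triadSum_le k l
    _ = min (nsq k : ℝ) (nsq l) / STorus := by field_simp

theorem sectional_curvature_klein_negative_general (habs : |k.1| ≠ |l.1| ∨ |k.2| ≠ |l.2|)
    (hcross : cross k l ≠ 0 ∨ cross k (conjPt l) ≠ 0) :
    (nsq (k + l) ≠ 0 ∧ nsq (k - l) ≠ 0 ∧
      nsq (k + conjPt l) ≠ 0 ∧ nsq (k - conjPt l) ≠ 0) ∧
    Ccurv k l < 0 ∧
    -(min (nsq k : ℝ) (nsq l) / STorus) ≤ Ccurv k l := by
  have hk : k ≠ 0 := by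
    rintro rfl
    simp [cross] at hcross
  have hl : l ≠ 0 := by
    rintro rfl
    simp [cross, conjPt] at hcross
  have nsq_add_ne_zero {l' : ℤ × ℤ} (h : |k.1| ≠ |l'.1| ∨ |k.2| ≠ |l'.2|) : nsq (k + l') ≠ 0 :=
    nsq_eq_zero.not.2 (add_ne_zero_of_abs_ne h)
  have hadd : nsq (k + l) ≠ 0 := nsq_add_ne_zero habs
  have hsub : nsq (k - l) ≠ 0 := sub_eq_add_neg k l ▸ nsq_add_ne_zero (by simpa using habs)
  have hadd_conj : nsq (k + conjPt l) ≠ 0 := nsq_add_ne_zero (by simpa [conjPt] using habs)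
  have hsub_conj : nsq (k - conjPt l) ≠ 0 :=
    sub_eq_add_neg k (conjPt l) ▸ nsq_add_ne_zero (by simpa [conjPt] using habs)
  exact ⟨⟨hadd, hsub, hadd_conj, hsub_conj⟩,
    Ccurv_neg hk hl (triadSum_pos hadd hadd_conj hcross), neg_min_nsq_div_le_Ccurv hk hl⟩

end

theorem sectional_curvature_klein_negative
    (k l : ℕ × ℕ) (hk : k ≠ (0, 0)) (hl : l ≠ (0, 0))
    (h1 : k.1 ≠ l.1) (h2 : k.2 ≠ l.2) :
    (nsq (emb k + emb l) ≠ 0 ∧ nsq (emb k - emb l) ≠ 0 ∧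
     nsq (emb k + conjPt (emb l)) ≠ 0 ∧ nsq (emb k - conjPt (emb l)) ≠ 0) ∧
    Ccurv (emb k) (emb l) < 0 ∧
    -(min ((nsq (emb k) : ℝ)) ((nsq (emb l) : ℝ)) / STorus) ≤ Ccurv (emb k) (emb l) := by
  have hmul := fst_mul_snd_ne_zero_or_snd_mul_fst_ne_zero hk hl h1 h2
  exact sectional_curvature_klein_negative_general (.inl (by simpa [emb] using h1))
    (cross_ne_zero_or_cross_conjPt_ne_zero (by simpa [emb] using hmul))
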